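/- Let 𝔤 be a finite-dimensional complex semisimple Lie algebra, (e,h,f) an sl2-triple in 𝔤 with e a distinguished nilpotent element, and let m_r be the largest eigenvalue of the restriction of ad h to the centralizer 𝔤^e. Then the eigenspace of ad h in 𝔤^e for the eigenvalue m_r is contained in the centre 𝔷(𝔤^e) of 𝔤^e; consequently it coincides with 𝔷_max, the eigenspace of the restriction of ad h to 𝔷(𝔤^e) for its largest eigenvalue. -/

import Mathlib

open scoped ComplexOrder

/-- The centralizer `𝔤^e = {x ∈ 𝔤 : ⁅x, e⁆ = 0}` of an element `e`, as a Lie subalgebra. -/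
def centralizer (L : Type*) [LieRing L] [LieAlgebra ℂ L] (e : L) : LieSubalgebra ℂ L where
  carrier := {x : L | ⁅x, e⁆ = 0}
  add_mem' := fun {a b} ha hb => by
    simp only [Set.mem_setOf_eq] at *
    rw [add_lie, ha, hb, add_zero]
  zero_mem' := by simp
  smul_mem' := fun c a ha => by
    simp only [Set.mem_setOf_eq] at *
    rw [smul_lie, ha, smul_zero]
  lie_mem' := fun {a b} ha hb => by
    simp only [Set.mem_setOf_eq] at *
    simp [lie_lie, ha, hb]

/-- Membership in the centre `𝔷(𝔤^e)` of the centralizer of `e`: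
`v` centralizes `e` and commutes with every element of `𝔤^e`. -/
def InCenterOfCentralizer (L : Type*) [LieRing L] [LieAlgebra ℂ L] (e v : L) : Prop :=
  ⁅v, e⁆ = 0 ∧ ∀ y : L, ⁅y, e⁆ = 0 → ⁅v, y⁆ = 0

/-- The centre `𝔷(𝔤^e)` of the centralizer of `e`, as a subspace of `L`. -/
def zCenter (L : Type*) [LieRing L] [LieAlgebra ℂ L] (e : L) : Submodule ℂ L where
  carrier := {v : L | ⁅v, e⁆ = 0 ∧ ∀ y : L, ⁅y, e⁆ = 0 → ⁅v, y⁆ = 0}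
  add_mem' := fun {a b} ha hb => ⟨by rw [add_lie, ha.1, hb.1, add_zero],
    fun y hy => by rw [add_lie, ha.2 y hy, hb.2 y hy, add_zero]⟩
  zero_mem' := ⟨zero_lie e, fun y _ => zero_lie y⟩
  smul_mem' := fun c a ha => ⟨by rw [smul_lie, ha.1, smul_zero],
    fun y hy => by rw [smul_lie, ha.2 y hy, smul_zero]⟩

/-- Property (P) for an `sl₂`-triple `(e, h, f)`: for every nonzero `v ∈ 𝔷(𝔤^e)`, the
eigenspace `𝔷_max` of the restriction of `ad h` to `𝔷(𝔤^e)` for its largest eigenvalue is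
contained in `[[f, 𝔤^e], v] = {⁅⁅f, x⁆, v⁆ : x ∈ 𝔤^e}`. -/
def PropertyP (L : Type*) [LieRing L] [LieAlgebra ℂ L] (e h f : L) : Prop :=
  ∀ m : ℂ,
    (∃ z : L, z ≠ 0 ∧ InCenterOfCentralizer L e z ∧ ⁅h, z⁆ = m • z) →
    (∀ m' : ℂ, (∃ z : L, z ≠ 0 ∧ InCenterOfCentralizer L e z ∧ ⁅h, z⁆ = m' • z) → m' ≤ m) →
    ∀ v : L, InCenterOfCentralizer L e v → v ≠ 0 →
      ∀ z : L, InCenterOfCentralizer L e z → ⁅h, z⁆ = m • z →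
        ∃ x : L, ⁅x, e⁆ = 0 ∧ ⁅⁅f, x⁆, v⁆ = z

/-- The stabilizer `{x ∈ 𝔮 : ξ(⁅x, y⁆) = 0 for all y ∈ 𝔮}` of a linear functional `ξ`. -/
def coadStab (Q : Type*) [LieRing Q] [LieAlgebra ℂ Q] (ξ : Module.Dual ℂ Q) : Submodule ℂ Q where
  carrier := {x : Q | ∀ y : Q, ξ ⁅x, y⁆ = 0}
  add_mem' := fun {a b} ha hb y => by rw [add_lie, map_add, ha y, hb y, add_zero]
  zero_mem' := fun y => by rw [zero_lie, map_zero]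
  smul_mem' := fun c a ha y => by rw [smul_lie, map_smul, ha y, smul_zero]

/-- The index of a complex Lie algebra:
`ind 𝔮 = min_{ξ ∈ 𝔮*} dim {x ∈ 𝔮 : ξ(⁅x, y⁆) = 0 for all y ∈ 𝔮}`. -/
noncomputable def lieIndex (Q : Type*) [LieRing Q] [LieAlgebra ℂ Q] : ℕ :=
  ⨅ ξ : Module.Dual ℂ Q, Module.finrank ℂ ↥(coadStab Q ξ)

/-- A nilpotent element `e` is distinguished if the only `x ∈ 𝔤^e` such that `ad x` is a
semisimple endomorphism of `𝔤` is `x = 0`. -/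
def IsDistinguished (L : Type*) [LieRing L] [LieAlgebra ℂ L] (e : L) : Prop :=
  ∀ x : L, ⁅x, e⁆ = 0 → (LieAlgebra.ad ℂ L x).IsSemisimple → x = 0

/-!
The Jordan decomposition in `𝔤` puts the semisimple part of every `x ∈ 𝔤^e` in `𝔤^e`, so `𝔤^e`
consists of ad-nilpotent elements as soon as `e` is distinguished. By Engel's theorem the Killing
form then vanishes on `𝔤^e × 𝔤^e`, that is, `𝔤^e ⊆ (ker ad e)^⊥ = im ad e`. A nonzero vector
killed by `e` and of weight `0` spans a trivial `sl₂`-module and is never in the image of `e`, so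
all weights of `ad h` on `𝔤^e` are positive integers.

Let `z ∈ 𝔤^e` have the top weight `μ`. If `⁅z, 𝔤^e⁆ ≠ 0`, it contains a weight vector, of weight
`n` say, and this lifts along `ad z` to a vector of weight `n - μ` in `𝔤^e`. Hence `n > μ`, which
is absurd.
-/

section Intertwining

open Module.End Polynomial

section CommRing

variable {R V W : Type*} [CommRing R] [AddCommGroup V] [Module R V] [AddCommGroup W] [Module R W]
  {φ : V →ₗ[R] W} {S : Module.End R V} {T : Module.End R W}

lemma comp_aeval_eq_aeval_comp (hST : φ ∘ₗ S = T ∘ₗ φ) (p : R[X]) :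
    φ ∘ₗ aeval S p = aeval T p ∘ₗ φ := by
  induction p using Polynomial.induction_on' with
  | add p q hp hq => rw [map_add, map_add, LinearMap.comp_add, LinearMap.add_comp, hp, hq]
  | monomial n a =>
    ext v
    have hpow : φ ((S ^ n) v) = (T ^ n) (φ v) :=
      (LinearMap.congr_fun (commute_pow_left_of_commute hST.symm n) v).symm
    simp [aeval_monomial, hpow]

lemma isNilpotent_of_injective_of_comp_eq_comp (hφ : Function.Injective φ)
    (hST : φ ∘ₗ S = T ∘ₗ φ) (hT : IsNilpotent T) : IsNilpotent S := by
  obtain ⟨n, hn⟩ := hT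
  refine ⟨n, LinearMap.ext fun v ↦ hφ ?_⟩
  simpa [hn] using (LinearMap.congr_fun (commute_pow_left_of_commute hST.symm n) v).symm

end CommRing

variable {K V W : Type*} [Field K] [AddCommGroup V] [Module K V] [AddCommGroup W] [Module K W]
  {φ : V →ₗ[K] W} {S : Module.End K V} {T : Module.End K W}

lemma isSemisimple_of_injective_of_comp_eq_comp [FiniteDimensional K W]
    (hφ : Function.Injective φ) (hST : φ ∘ₗ S = T ∘ₗ φ) (hT : T.IsSemisimple) :
    S.IsSemisimple := by
  refine isSemisimple_of_squarefree_aeval_eq_zero hT.minpoly_squarefree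
    (LinearMap.ext fun v ↦ hφ ?_)
  simpa using LinearMap.congr_fun (comp_aeval_eq_aeval_comp hST (minpoly K T)) v

lemma exists_eigenvector_mem_of_mem_map (hST : φ ∘ₗ S = T ∘ₗ φ) {p : Submodule K V}
    [FiniteDimensional K p] (hp : ∀ v ∈ p, S v ∈ p) {μ : K} {w : W} (hw : w ∈ p.map φ)
    (hw0 : w ≠ 0) (hμ : T w = μ • w) : ∃ v ∈ p, v ≠ 0 ∧ S v = μ • v := by
  let S' : Module.End K V := S - μ • 1
  let T' : Module.End K W := T - μ • 1
  have hST' (v : V) : φ (S' v) = T' (φ v) := by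
    simpa [S', T'] using LinearMap.congr_fun hST v
  have hS' (v : V) (hv : v ∈ p) : S' v ∈ p := p.sub_mem (hp v hv) (p.smul_mem μ hv)
  have hT' : ∀ x ∈ p.map φ, T' x ∈ p.map φ := by
    rintro - ⟨v, hv, rfl⟩
    exact ⟨S' v, hS' v hv, hST' v⟩
  -- Otherwise `S - μ` is bijective on `p`, so `T - μ` is bijective on the image of `p`.
  by_contra! hno
  have hinj : Set.InjOn S' p := by
    refine S'.injOn_of_disjoint_ker le_rfl (Submodule.disjoint_def.mpr fun v hv hSv ↦ ?_)
    by_contra hv0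
    exact hno v hv hv0 (by simpa [S', sub_eq_zero] using hSv)
  have hsurj : Set.SurjOn T' (p.map φ) (p.map φ) := by
    rintro - ⟨v, hv, rfl⟩
    obtain ⟨u, hu, rfl⟩ := (LinearMap.injOn_iff_surjOn hS').mp hinj hv
    exact ⟨φ u, ⟨u, hu, rfl⟩, (hST' u).symm⟩
  have hinj' : Set.InjOn T' (p.map φ) := (LinearMap.injOn_iff_surjOn hT').mpr hsurj
  exact hw0 (hinj' hw (zero_mem _) (by simp [T', hμ]))

end Intertwining

section Sl2

open LieModule

section CommRing

variable {R L M : Type*} [CommRing R] [LieRing L] [LieAlgebra R L]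
  [AddCommGroup M] [Module R M] [LieRingModule L M] [LieModule R L M] {h e f : L}

lemma lie_e_pow_succ_toEnd_f (t : IsSl2Triple h e f) (n : ℕ) (v : M) :
    ⁅e, (toEnd R L M f ^ (n + 1)) v⁆ =
      (toEnd R L M f ^ (n + 1)) ⁅e, v⁆ +
        (n + 1 : R) • (toEnd R L M f ^ n) (⁅h, v⁆ - (n : R) • v) := by
  induction n generalizing v with
  | zero => simp [leibniz_lie e f v, t.lie_e_f, add_comm]
  | succ n ih =>
    have hef : ⁅e, ⁅f, v⁆⁆ = ⁅h, v⁆ + ⁅f, ⁅e, v⁆⁆ := by rw [leibniz_lie, t.lie_e_f]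
    have hhf : ⁅h, ⁅f, v⁆⁆ = ⁅f, ⁅h, v⁆⁆ - (2 : R) • ⁅f, v⁆ := by
      rw [leibniz_lie, t.lie_lie_smul_f R, neg_lie, smul_lie]
      abel
    rw [pow_succ (n := n + 1), Module.End.mul_apply, ih, toEnd_apply_apply, hef, hhf]
    simp only [pow_succ, Module.End.mul_apply, toEnd_apply_apply, map_add, map_sub, map_smul]
    push_cast
    module

lemma lie_e_lie_h_eq_zero (t : IsSl2Triple h e f) {v : M} (hv : ⁅e, v⁆ = 0) :
    ⁅e, ⁅h, v⁆⁆ = 0 := by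
  rw [leibniz_lie, ← lie_skew, t.lie_h_e_nsmul, hv]
  simp [hv]

end CommRing

lemma isNilpotent_of_mul_sub_mul_eq_smul {K A : Type*} [Field K] [CharZero K] [Ring A]
    [Algebra K A] [FiniteDimensional K A] {a b : A} {μ : K} (hμ : μ ≠ 0)
    (hab : a * b - b * a = μ • b) : IsNilpotent b := by
  have hpow (n : ℕ) : a * b ^ n - b ^ n * a = (n * μ) • b ^ n := by
    induction n with
    | zero => simp
    | succ n ih =>
      calc a * b ^ (n + 1) - b ^ (n + 1) * a
          = (a * b ^ n - b ^ n * a) * b + b ^ n * (a * b - b * a) := by noncomm_ring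
        _ = ((n + 1 : ℕ) * μ) • b ^ (n + 1) := by
          rw [ih, hab, smul_mul_assoc, mul_smul_comm, ← pow_succ, ← add_smul]
          push_cast
          ring_nf
  by_contra hb
  let D : Module.End K A := LinearMap.mulLeft K a - LinearMap.mulRight K a
  have hinj : Function.Injective fun n : ℕ ↦ (n * μ : K) := fun m n hmn ↦ by simpa [hμ] using hmn
  refine Set.infinite_range_of_injective hinj (D.finite_hasEigenvalue.subset ?_)
  rintro - ⟨n, rfl⟩
  exact Module.End.hasEigenvalue_of_hasEigenvector
    ⟨Module.End.mem_eigenspace_iff.mpr (hpow n), fun hbn ↦ hb ⟨n, hbn⟩⟩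

variable {K L M : Type*} [Field K] [CharZero K] [LieRing L] [LieAlgebra K L]
  [AddCommGroup M] [Module K M] [FiniteDimensional K M] [LieRingModule L M] [LieModule K L M]
  {h e f : L}

attribute [local instance] LieRing.ofAssociativeRing in
variable (K M) in
lemma isNilpotent_toEnd_f (t : IsSl2Triple h e f) : IsNilpotent (toEnd K L M f) := by
  refine isNilpotent_of_mul_sub_mul_eq_smul (a := toEnd K L M h) (μ := (-2 : K)) (by simp) ?_
  rw [← LieRing.of_associative_ring_bracket, ← LieHom.map_lie, t.lie_lie_smul_f K, map_neg,
    map_smul, neg_smul]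

lemma exists_nat_weight_of_lie_f_lie_e_eq_zero (t : IsSl2Triple h e f) {m : M} {μ : K}
    (hm0 : m ≠ 0) (hm : ⁅h, m⁆ = μ • m) (hfe : ⁅f, ⁅e, m⁆⁆ = 0) : ∃ n : ℕ, μ = n := by
  obtain ⟨N, hN⟩ := isNilpotent_toEnd_f K M t
  obtain ⟨n, hn, hn'⟩ := Nat.exists_not_and_succ_of_not_zero_of_exists
    (p := fun n ↦ (toEnd K L M f ^ n) m = 0) (by simpa using hm0) ⟨N, by simp [hN]⟩
  have key := lie_e_pow_succ_toEnd_f (R := K) t n m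
  rw [hn', lie_zero, hm, ← sub_smul, map_smul, pow_succ, Module.End.mul_apply, toEnd_apply_apply,
    hfe, map_zero, zero_add, eq_comm, smul_smul, smul_eq_zero_iff_left hn] at key
  exact ⟨n, sub_eq_zero.mp ((mul_eq_zero.mp key).resolve_left (Nat.cast_add_one_ne_zero n))⟩

lemma exists_nat_weight_mem_of_lie_e_eq_zero (t : IsSl2Triple h e f) {q : Submodule K M}
    (hqe : ∀ v ∈ q, ⁅e, v⁆ = 0) (hqh : ∀ v ∈ q, ⁅h, v⁆ ∈ q) (hq : q ≠ ⊥) :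
    ∃ n : ℕ, ∃ w ∈ q, w ≠ 0 ∧ ⁅h, w⁆ = (n : K) • w := by
  obtain ⟨v, hvq, hv0⟩ := q.exists_mem_ne_zero_of_ne_bot hq
  obtain ⟨N, hN⟩ := isNilpotent_toEnd_f K M t
  replace hN : (toEnd K L M f ^ N) v = 0 := by simp [hN]
  -- If `f ^ (N + 1)` kills `v`, then `f ^ N` kills `h v - N v`, as `e` kills `v`.
  induction N generalizing v with
  | zero => exact absurd (by simpa using hN) hv0
  | succ N ih =>
    by_cases hv : ⁅h, v⁆ - (N : K) • v = 0
    · exact ⟨N, v, hvq, hv0, sub_eq_zero.mp hv⟩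
    refine ih _ (q.sub_mem (hqh v hvq) (q.smul_mem _ hvq)) hv ?_
    have key := lie_e_pow_succ_toEnd_f (R := K) t N v
    rw [hN, hqe v hvq, lie_zero, map_zero, zero_add, eq_comm] at key
    exact (smul_eq_zero.mp key).resolve_left (Nat.cast_add_one_ne_zero N)

lemma exists_lie_h_sub_smul_eq_of_lie_e_eq_zero (t : IsSl2Triple h e f) {μ : K}
    (hμ : ∀ n : ℕ, μ ≠ n) {u : M} (hu : ⁅e, u⁆ = 0) : ∃ b, ⁅e, b⁆ = 0 ∧ ⁅h, b⁆ - μ • b = u := by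
  let S : Module.End K M := toEnd K L M h - μ • 1
  let p : Submodule K M := LinearMap.ker (toEnd K L M e)
  have hSp (v : M) (hv : v ∈ p) : S v ∈ p :=
    p.sub_mem (lie_e_lie_h_eq_zero t hv) (p.smul_mem μ hv)
  have hinj : Set.InjOn S p := by
    refine S.injOn_of_disjoint_ker le_rfl (Submodule.disjoint_def.mpr fun v hv hSv ↦ ?_)
    by_contra hv0
    have P : t.HasPrimitiveVectorWith v μ := ⟨hv0, sub_eq_zero.mp hSv, hv⟩
    obtain ⟨n, hn⟩ := P.exists_nat
    exact hμ n hn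
  exact (LinearMap.injOn_iff_surjOn hSp).mp hinj hu

lemma notMem_range_toEnd_e (t : IsSl2Triple h e f) {v : M}
    (P : t.HasPrimitiveVectorWith v (0 : K)) : v ∉ LinearMap.range (toEnd K L M e) := by
  rintro ⟨a, ha : ⁅e, a⁆ = v⟩
  have hfv : ⁅f, v⁆ = 0 := by
    simpa using P.pow_toEnd_f_eq_zero_of_eq_nat (n := 0) Nat.cast_zero.symm
  have hneg (n : ℕ) : (-2 : K) ≠ n := fun hn ↦
    (Nat.cast_ne_zero (R := K)).mpr (by lia : n + 2 ≠ 0) (by push_cast; rw [← hn]; ring)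
  have hea : ⁅e, ⁅h, a⁆ - (-2 : K) • a⁆ = 0 := by
    have hhv : ⁅h, ⁅e, a⁆⁆ = 0 := by rw [ha, P.lie_h, zero_smul]
    rw [leibniz_lie, t.lie_h_e_smul K, smul_lie] at hhv
    rw [lie_sub, lie_smul, neg_smul, sub_neg_eq_add, add_comm, hhv]
  -- Subtracting `b` makes `a` an exact weight vector of weight `-2`.
  obtain ⟨b, heb, hhb⟩ := exists_lie_h_sub_smul_eq_of_lie_e_eq_zero t hneg hea
  have heab : ⁅e, a - b⁆ = v := by rw [lie_sub, ha, heb, sub_zero]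
  have hhab : ⁅h, a - b⁆ = (-2 : K) • (a - b) := by
    rw [lie_sub, smul_sub, sub_eq_sub_iff_sub_eq_sub, hhb]
  have hab0 : a - b ≠ 0 := fun hab ↦ P.ne_zero (by rw [← heab, hab, lie_zero])
  obtain ⟨n, hn⟩ := exists_nat_weight_of_lie_f_lie_e_eq_zero t hab0 hhab (by rw [heab, hfv])
  exact hneg n hn

end Sl2

section JordanDecomposition

open LieAlgebra

attribute [local instance] LieRing.ofAssociativeRing

lemma ad_comp_ad {R L : Type*} [CommRing R] [LieRing L] [LieAlgebra R L] (x : L) :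
    (ad R L).toLinearMap ∘ₗ ad R L x =
      ad R (Module.End R L) (ad R L x) ∘ₗ (ad R L).toLinearMap :=
  LinearMap.ext fun y ↦ (ad R L).map_lie x y

variable {K L : Type*} [Field K] [LieRing L] [LieAlgebra K L] [FiniteDimensional K L]
  [IsKilling K L]

lemma exists_ad_eq_of_lie_ad_eq {S D : Module.End K L}
    (hSD : ∀ y, ⁅S, ad K L y⁆ = ad K L (D y)) : ∃ d : L, ad K L d = D := by
  have hD (y z : L) : D ⁅y, z⁆ = ⁅y, D z⁆ - ⁅z, D y⁆ := by
    apply LieModule.IsFaithful.injective_toEnd (R := K) (L := L) (M := L)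
    change ad K L _ = ad K L _
    rw [← hSD, LieHom.map_lie, leibniz_lie, hSD, hSD, ← LieHom.map_lie, ← LieHom.map_lie,
      ← map_add, ← lie_skew z, sub_neg_eq_add, add_comm]
  obtain ⟨d, hd⟩ := LieDerivation.IsKilling.exists_eq_ad (⟨D, hD⟩ : LieDerivation K L L)
  exact ⟨d, by rw [← LieDerivation.coe_ad_apply_eq_ad_apply d, hd]⟩

variable [PerfectField K]

lemma exists_isSemisimple_ad_isNilpotent_ad_sub (x : L) :
    ∃ s : L, (ad K L s).IsSemisimple ∧ IsNilpotent (ad K L (x - s)) ∧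
      ad K L s ∈ Algebra.adjoin K {ad K L x} := by
  obtain ⟨N, hN_mem, S, hS_mem, hN, hS, hNS⟩ := (ad K L x).exists_isNilpotent_isSemisimple
  have hcomm : Commute N S := Algebra.commute_of_mem_adjoin_singleton_of_commute hS_mem
    (Algebra.commute_of_mem_adjoin_self hN_mem).symm
  have hmem := ad_mem_adjoin_of_isSemisimple hcomm hN hS
  rw [← hNS, Algebra.adjoin_singleton_eq_range_aeval] at hmem
  obtain ⟨q, hq : Polynomial.aeval _ q = ad K (Module.End K L) S⟩ := hmem
  -- `ad` intertwines `D` with `ad S`, which makes `D` a derivation, hence inner, and semisimple.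
  let D : Module.End K L := Polynomial.aeval (ad K L x) q
  have hD : (ad K L).toLinearMap ∘ₗ D = ad K (Module.End K L) S ∘ₗ (ad K L).toLinearMap := by
    rw [← hq]
    exact comp_aeval_eq_aeval_comp (ad_comp_ad x) q
  obtain ⟨s, hs⟩ := exists_ad_eq_of_lie_ad_eq fun y ↦ (LinearMap.congr_fun hD y).symm
  have hinj : Function.Injective (ad K L).toLinearMap := LieModule.IsFaithful.injective_toEnd
  refine ⟨s, ?_, ?_, hs ▸ Polynomial.aeval_mem_adjoin_singleton K _⟩
  · exact hs ▸ isSemisimple_of_injective_of_comp_eq_comp hinj hD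
      (ad_isSemisimple_of_isSemisimple hS)
  · refine isNilpotent_of_injective_of_comp_eq_comp hinj ?_ (ad_nilpotent_of_nilpotent (R := K) hN)
    rw [map_sub, hs, LinearMap.comp_sub, ad_comp_ad, hD, ← LinearMap.sub_comp, ← map_sub,
      hNS, add_sub_cancel_right]

lemma isNilpotent_ad_of_forall_isSemisimple_eq_zero {e : L}
    (he : ∀ s : L, ⁅e, s⁆ = 0 → (ad K L s).IsSemisimple → s = 0) {x : L} (hx : ⁅e, x⁆ = 0) :
    IsNilpotent (ad K L x) := by
  obtain ⟨s, hs, hxs, hs_mem⟩ := exists_isSemisimple_ad_isNilpotent_ad_sub (K := K) x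
  have hxe : e ∈ (ad K L x).maxGenEigenspace 0 := by
    refine Module.End.eigenspace_le_maxGenEigenspace (Module.End.mem_eigenspace_iff.mpr ?_)
    rw [ad_apply, ← lie_skew, hx, neg_zero, zero_smul]
  have hse : ⁅s, e⁆ = (0 : K) • e :=
    Module.End.apply_eq_of_mem_of_comm_of_isFinitelySemisimple_of_isNil hxe
      (Algebra.commute_of_mem_adjoin_self hs_mem) hs.isFinitelySemisimple
      (map_sub (ad K L) x s ▸ hxs)
  have hs0 : s = 0 := he s (by rw [← lie_skew, hse, zero_smul, neg_zero]) hs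
  simpa [hs0] using hxs

end JordanDecomposition

section Centralizer

open LieAlgebra

section CommRing

variable (R : Type*) {L : Type*} [CommRing R] [LieRing L] [LieAlgebra R L]

/-- The centralizer of an element of a Lie algebra over any commutative ring, encoded as
`{x | ⁅e, x⁆ = 0}` so that its underlying submodule is the kernel of `ad e`. -/
def lieCentralizer (e : L) : LieSubalgebra R L where
  __ := LinearMap.ker (ad R L e)
  lie_mem' {x y} (hx : ⁅e, x⁆ = 0) (hy : ⁅e, y⁆ = 0) := by
    change ⁅e, ⁅x, y⁆⁆ = 0
    rw [leibniz_lie, hx, hy, zero_lie, lie_zero, add_zero]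

variable {R}

lemma killingForm_apply_eq_zero_of_forall_isNilpotent_ad [IsReduced R] [IsNoetherian R L]
    {A : LieSubalgebra R L} (hA : ∀ x ∈ A, IsNilpotent (ad R L x)) {x y : L} (hx : x ∈ A)
    (hy : y ∈ A) : killingForm R L x y = 0 := by
  have hnil : LieModule.IsNilpotent A L :=
    (LieModule.isNilpotent_iff_forall (R := R)).mpr fun a ↦ hA a a.2
  exact LinearMap.congr_fun₂ (LieModule.traceForm_eq_zero_of_isNilpotent R A L) ⟨x, hx⟩ ⟨y, hy⟩

end CommRing

variable {K L : Type*} [Field K] [LieRing L] [LieAlgebra K L] [FiniteDimensional K L]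
  [IsKilling K L]

variable (K) in
lemma orthogonal_ker_ad_eq_range_ad (e : L) :
    (killingForm K L).orthogonal (LinearMap.ker (ad K L e)) = LinearMap.range (ad K L e) := by
  have hker : LinearMap.ker (ad K L e) =
      (killingForm K L).orthogonal (LinearMap.range (ad K L e)) := by
    ext x
    have hinv (y : L) : killingForm K L ⁅e, y⁆ x = -killingForm K L y ⁅e, x⁆ :=
      LieModule.traceForm_apply_lie_apply' K L L e y x
    rw [LinearMap.mem_ker, ad_apply, LinearMap.BilinForm.mem_orthogonal_iff]
    refine ⟨fun hx ↦ ?_, fun hx ↦ ?_⟩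
    · rintro - ⟨y, rfl⟩
      rw [ad_apply, hinv, hx, map_zero, neg_zero]
    · refine (IsKilling.killingForm_nondegenerate K L).2 _ fun y ↦ ?_
      rw [← neg_eq_zero, ← hinv]
      exact hx _ ⟨y, rfl⟩
  rw [hker]
  exact LinearMap.BilinForm.orthogonal_orthogonal (IsKilling.killingForm_nondegenerate K L)
    (LieModule.traceForm_isSymm K L L).isRefl _

variable [CharZero K] {h e f : L}

lemma exists_pos_nat_weight (t : IsSl2Triple h e f)
    (hnil : ∀ x ∈ lieCentralizer K e, IsNilpotent (ad K L x)) {v : L} {μ : K} (hv0 : v ≠ 0)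
    (hev : ⁅e, v⁆ = 0) (hhv : ⁅h, v⁆ = μ • v) : ∃ n : ℕ, 0 < n ∧ μ = n := by
  have P : t.HasPrimitiveVectorWith v μ := ⟨hv0, hhv, hev⟩
  obtain ⟨n, rfl⟩ := P.exists_nat
  refine ⟨n, Nat.pos_of_ne_zero ?_, rfl⟩
  rintro rfl
  have hv : v ∈ (killingForm K L).orthogonal (LinearMap.ker (ad K L e)) := fun y hy ↦
    killingForm_apply_eq_zero_of_forall_isNilpotent_ad hnil hy hev
  rw [orthogonal_ker_ad_eq_range_ad] at hv
  exact notMem_range_toEnd_e t (Nat.cast_zero (R := K) ▸ P) hv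

lemma lie_eq_zero_of_top_weight (t : IsSl2Triple h e f)
    (hnil : ∀ x ∈ lieCentralizer K e, IsNilpotent (ad K L x)) {z : L} {μ : K}
    (hez : ⁅e, z⁆ = 0) (hhz : ⁅h, z⁆ = μ • z)
    (htop : ∀ n : ℕ, 0 < n → ∀ w : L, ⁅e, w⁆ = 0 → ⁅h, w⁆ = (μ + n) • w → w = 0)
    {y : L} (hey : ⁅e, y⁆ = 0) : ⁅z, y⁆ = 0 := by
  let p : Submodule K L := (lieCentralizer K e).toSubmodule
  let q : Submodule K L := p.map (ad K L z)
  have hp : ∀ v ∈ p, ⁅h, v⁆ ∈ p := fun v ↦ lie_e_lie_h_eq_zero t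
  have hqe : ∀ w ∈ q, ⁅e, w⁆ = 0 := by
    rintro - ⟨v, hv, rfl⟩
    exact (lieCentralizer K e).lie_mem hez hv
  have hshift (v : L) : ⁅z, ⁅h, v⁆⁆ = ⁅h, ⁅z, v⁆⁆ - μ • ⁅z, v⁆ := by
    rw [leibniz_lie h, hhz, smul_lie, add_sub_cancel_left]
  have hqh : ∀ w ∈ q, ⁅h, w⁆ ∈ q := by
    rintro - ⟨v, hv, rfl⟩
    exact ⟨⁅h, v⁆ + μ • v, p.add_mem (hp v hv) (p.smul_mem μ hv), by simp [hshift]⟩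
  by_contra hzy
  have hq : q ≠ ⊥ := fun hq ↦ hzy ((Submodule.eq_bot_iff q).mp hq _ ⟨y, hey, rfl⟩)
  obtain ⟨n, w, hwq, hw0, hhw⟩ := exists_nat_weight_mem_of_lie_e_eq_zero (K := K) t hqe hqh hq
  obtain ⟨v, hev, hv0, hhv⟩ : ∃ v ∈ p, v ≠ 0 ∧ ⁅h, v⁆ = (n - μ) • v :=
    exists_eigenvector_mem_of_mem_map (S := ad K L h) (T := ad K L h - μ • 1)
      (LinearMap.ext hshift) hp hwq hw0 (by simp [hhw, sub_smul])
  obtain ⟨k, hk0, hk⟩ := exists_pos_nat_weight t hnil hv0 hev hhv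
  exact hw0 (htop k hk0 w (hqe w hwq) (by rw [hhw, ← hk, add_sub_cancel]))

end Centralizer

theorem top_eigenspace_le_center_general {K L : Type*} [Field K] [PartialOrder K]
    [IsStrictOrderedRing K] [LieRing L] [LieAlgebra K L] [FiniteDimensional K L]
    [LieAlgebra.IsSemisimple K L] {e h f : L} (ht : IsSl2Triple h e f)
    (hdist : ∀ x : L, ⁅x, e⁆ = 0 → (LieAlgebra.ad K L x).IsSemisimple → x = 0) {mr : K}
    (hmax : ∀ m : K, (∃ z : L, z ≠ 0 ∧ ⁅z, e⁆ = 0 ∧ ⁅h, z⁆ = m • z) → m ≤ mr) :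
    (∀ z : L, ⁅z, e⁆ = 0 → ⁅h, z⁆ = mr • z →
      ⁅z, e⁆ = 0 ∧ ∀ y : L, ⁅y, e⁆ = 0 → ⁅z, y⁆ = 0) ∧
    (∀ m : K, (∃ z : L, z ≠ 0 ∧ (⁅z, e⁆ = 0 ∧ ∀ y : L, ⁅y, e⁆ = 0 → ⁅z, y⁆ = 0) ∧
      ⁅h, z⁆ = m • z) → m ≤ mr) ∧
    {z : L | ⁅z, e⁆ = 0 ∧ ⁅h, z⁆ = mr • z} =
      {z : L | (⁅z, e⁆ = 0 ∧ ∀ y : L, ⁅y, e⁆ = 0 → ⁅z, y⁆ = 0) ∧ ⁅h, z⁆ = mr • z} := by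
  have hcomm (x : L) : ⁅x, e⁆ = 0 ↔ ⁅e, x⁆ = 0 := by rw [← lie_skew, neg_eq_zero]
  have hnil : ∀ x ∈ lieCentralizer K e, IsNilpotent (LieAlgebra.ad K L x) := fun x hx ↦
    isNilpotent_ad_of_forall_isSemisimple_eq_zero (fun s hs ↦ hdist s ((hcomm s).mpr hs)) hx
  have hcenter (z : L) (hz : ⁅z, e⁆ = 0) (hhz : ⁅h, z⁆ = mr • z) (y : L) (hy : ⁅y, e⁆ = 0) :
      ⁅z, y⁆ = 0 := by
    refine lie_eq_zero_of_top_weight ht hnil ((hcomm z).mp hz) hhz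
      (fun n hn w hw hhw ↦ ?_) ((hcomm y).mp hy)
    by_contra hw0
    have hle : mr + n ≤ mr := hmax _ ⟨w, hw0, (hcomm w).mpr hw, hhw⟩
    exact hn.ne' (by simpa using hle)
  refine ⟨fun z hz hhz ↦ ⟨hz, hcenter z hz hhz⟩,
    fun m ⟨z, hz0, hz, hm⟩ ↦ hmax m ⟨z, hz0, hz.1, hm⟩, Set.ext fun z ↦ ?_⟩
  exact ⟨fun hz ↦ ⟨⟨hz.1, hcenter z hz.1 hz.2⟩, hz.2⟩, fun hz ↦ ⟨hz.1.1, hz.2⟩⟩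

/-- For a distinguished nilpotent `e`, the eigenspace of `ad h` in `𝔤^e`
for the largest eigenvalue `m_r` is contained in the centre `𝔷(𝔤^e)`; consequently `m_r` is
also the largest eigenvalue of `ad h` on `𝔷(𝔤^e)` and the two eigenspaces coincide, i.e. the
`m_r`-eigenspace of `ad h` in `𝔤^e` is `𝔷_max`. -/
theorem top_eigenspace_le_center
    (L : Type*) [LieRing L] [LieAlgebra ℂ L] [FiniteDimensional ℂ L]
    [LieAlgebra.IsSemisimple ℂ L] (e h f : L)
    (ht : IsSl2Triple h e f) (he : IsNilpotent (LieAlgebra.ad ℂ L e))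
    (hdist : IsDistinguished L e) (mr : ℂ)
    (hmr : ∃ z : L, z ≠ 0 ∧ ⁅z, e⁆ = 0 ∧ ⁅h, z⁆ = mr • z)
    (hmax : ∀ m : ℂ, (∃ z : L, z ≠ 0 ∧ ⁅z, e⁆ = 0 ∧ ⁅h, z⁆ = m • z) → m ≤ mr) :
    (∀ z : L, ⁅z, e⁆ = 0 → ⁅h, z⁆ = mr • z → InCenterOfCentralizer L e z) ∧
    (∀ m : ℂ, (∃ z : L, z ≠ 0 ∧ InCenterOfCentralizer L e z ∧ ⁅h, z⁆ = m • z) → m ≤ mr) ∧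
    {z : L | ⁅z, e⁆ = 0 ∧ ⁅h, z⁆ = mr • z} =
      {z : L | InCenterOfCentralizer L e z ∧ ⁅h, z⁆ = mr • z} :=
  top_eigenspace_le_center_general ht hdist hmax
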